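/- (Approximation Theorem.) For every λI-term M, every environment Γ;Δ and every multi-type σ: (Γ,Δ,σ) belongs to the multi-type interpretation ⟦M⟧ if and only if either σ = e_{⋃Δ} with supp(Γ) = ∅ and dom(Δ) = fv(M), or σ is a simple type α and there exists a λI-resource term s ∈ T(M) such that Γ;Δ ⊢ s : α is derivable in the resource multi-type system. -/

import Mathlib

set_option maxHeartbeats 1000000

/-! # λ-terms (named variables over ℕ) -/

inductive Lam : Type
  | var : ℕ → Lam
  | app : Lam → Lam → Lam
  | lam : ℕ → Lam → Lam
deriving DecidableEq

namespace Lam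

/-- Free variables of a λ-term. -/
def fv : Lam → Finset ℕ
  | var x => {x}
  | app M N => M.fv ∪ N.fv
  | lam x M => M.fv.erase x

/-- λI-terms: every abstraction `λx.M` satisfies `x ∈ fv M`. -/
def IsI : Lam → Prop
  | var _ => True
  | app M N => M.IsI ∧ N.IsI
  | lam x M => x ∈ M.fv ∧ M.IsI

/-- A variable not belonging to a given finite set. -/
def freshVar (s : Finset ℕ) : ℕ := (s.sup id) + 1

/-- Capture-avoiding simultaneous substitution (bound variables are freshened). -/
def substF : Lam → (ℕ → Lam) → Lam
  | var x, σ => σ x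
  | app M N, σ => app (M.substF σ) (N.substF σ)
  | lam x M, σ =>
      let y := freshVar ((M.fv.erase x).biUnion fun z => (σ z).fv)
      lam y (M.substF (Function.update σ x (var y)))

/-- Capture-avoiding substitution `M[N/x]`. -/
def subst (M : Lam) (x : ℕ) (N : Lam) : Lam :=
  M.substF fun z => if z = x then N else var z

/-- Being an abstraction. -/
def isAbs : Lam → Prop
  | lam _ _ => True
  | _ => False

end Lam

/-- One-step β-reduction. -/
inductive Beta : Lam → Lam → Prop
  | beta (x : ℕ) (M N : Lam) : Beta (.app (.lam x M) N) (M.subst x N)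
  | appL {M M' : Lam} (N : Lam) : Beta M M' → Beta (.app M N) (.app M' N)
  | appR {N N' : Lam} (M : Lam) : Beta N N' → Beta (.app M N) (.app M N')
  | lam (x : ℕ) {M M' : Lam} : Beta M M' → Beta (.lam x M) (.lam x M')

/-- One-step head reduction. -/
inductive Head : Lam → Lam → Prop
  | beta (x : ℕ) (M N : Lam) : Head (.app (.lam x M) N) (M.subst x N)
  | app {M M' : Lam} (N : Lam) : ¬ M.isAbs → Head M M' → Head (.app M N) (.app M' N)
  | lam (x : ℕ) {M M' : Lam} : Head M M' → Head (.lam x M) (.lam x M')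

/-- Iterated head reduction. -/
def HeadStar : Lam → Lam → Prop := Relation.ReflTransGen Head

/-- Terms of the shape `y M₁ ⋯ Mₖ`. -/
inductive Neutral : Lam → Prop
  | var (x : ℕ) : Neutral (.var x)
  | app {M : Lam} (N : Lam) : Neutral M → Neutral (.app M N)

/-- Head normal forms `λx₁…xₙ.y M₁ ⋯ Mₖ`. -/
inductive Hnf : Lam → Prop
  | neutral {M : Lam} : Neutral M → Hnf M
  | lam (x : ℕ) {M : Lam} : Hnf M → Hnf (.lam x M)

/-- `M` has a head normal form. -/
def HasHnf (M : Lam) : Prop := ∃ H, HeadStar M H ∧ Hnf H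

/-! # Multi-types -/

/-- Simple types: atoms `a ∈ ℕ`, arrows `[]_X → β` and `[α₀,…,αₙ] → β`. -/
inductive STy : Type
  | atom : ℕ → STy
  | arr0 : Finset ℕ → STy → STy
  | arrP : STy → List STy → STy → STy

/-- Multiset types: the annotated empty multiset `[]_X` or a
non-empty multiset `[α₀,…,αₙ]` (head plus tail). -/
inductive MTy : Type
  | empty : Finset ℕ → MTy
  | mk : STy → List STy → MTy

/-- The arrow type `ᾱ → β`. -/
def MTy.arr : MTy → STy → STy
  | .empty X, β => .arr0 X β
  | .mk α l, β => .arrP α l β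

/-- The underlying multiset of simple types of a multiset type. -/
def MTy.toM : MTy → Multiset STy
  | .empty _ => 0
  | .mk α l => α ::ₘ (l : Multiset STy)

/-- Multi-types: `σ ::= e_X | α`. -/
inductive OTy : Type
  | esum : Finset ℕ → OTy
  | simple : STy → OTy

mutual
/-- Atoms occurring in a simple type. -/
def STy.atoms : STy → Finset ℕ
  | .atom a => {a}
  | .arr0 _ β => β.atoms
  | .arrP α l β => α.atoms ∪ STy.atomsL l ∪ β.atoms
def STy.atomsL : List STy → Finset ℕ
  | [] => ∅
  | α :: l => α.atoms ∪ STy.atomsL l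
end

/-! # Environments -/

/-- Type environments: finitely supported maps from variables
to finite multisets of simple types; added pointwise. -/
abbrev TEnv := ℕ →₀ Multiset STy

/-- Variable environments: finite partial maps from variables to finite
sets of variables. -/
abbrev VEnv := Finmap (fun _ : ℕ => Finset ℕ)

namespace VEnv

/-- `⋃Δ`: the union of the values of `Δ`. -/
def uni (Δ : VEnv) : Finset ℕ :=
  Δ.keys.biUnion fun x => (Δ.lookup x).getD ∅

/-- Coherence `Δ₀ ≍ Δ₁`: agreement on the common domain. -/
def Coh (Δ₀ Δ₁ : VEnv) : Prop :=
  ∀ x : ℕ, x ∈ Δ₀ → x ∈ Δ₁ → Δ₀.lookup x = Δ₁.lookup x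

end VEnv

/-! # The multi-type system for the λI-calculus -/

mutual
/-- Typing judgement `Γ; Δ ⊢ M : σ`. -/
inductive Der : TEnv → VEnv → Lam → OTy → Prop
  | esum {Δ : VEnv} {M : Lam} :
      Δ.keys = M.fv → Der 0 Δ M (.esum Δ.uni)
  | ax (x : ℕ) (α : STy) (X : Finset ℕ) :
      Der (Finsupp.single x {α}) (Finmap.singleton x X) (.var x) (.simple α)
  | app {Γ₀ Γ₁ : TEnv} {Δ₀ Δ₁ : VEnv} {M N : Lam} {m : MTy} {β : STy} :
      Der Γ₀ Δ₀ M (.simple (m.arr β)) → DerB Γ₁ Δ₁ N m → VEnv.Coh Δ₀ Δ₁ →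
      Der (Γ₀ + Γ₁) (Δ₀ ∪ Δ₁) (.app M N) (.simple β)
  | lam0 {Γ : TEnv} {Δ : VEnv} {x : ℕ} {X : Finset ℕ} {M : Lam} {β : STy} :
      Γ x = 0 → x ∉ Δ → Der Γ (Δ.insert x X) M (.simple β) →
      Der Γ Δ (.lam x M) (.simple (.arr0 X β))
  | lamP {Γ : TEnv} {Δ : VEnv} {x : ℕ} {X : Finset ℕ} {M : Lam} {α : STy}
      {l : List STy} {β : STy} :
      Γ x = 0 → x ∉ Δ →
      Der (Γ + Finsupp.single x (MTy.mk α l).toM) (Δ.insert x X) M (.simple β) →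
      Der Γ Δ (.lam x M) (.simple (.arrP α l β))

/-- Typing judgement `Γ; Δ ⊢! M : ᾱ`. -/
inductive DerB : TEnv → VEnv → Lam → MTy → Prop
  | bang0 {Δ : VEnv} {M : Lam} :
      Δ.keys = M.fv → DerB 0 Δ M (.empty Δ.uni)
  | one {Γ : TEnv} {Δ : VEnv} {M : Lam} {α : STy} :
      Der Γ Δ M (.simple α) → DerB Γ Δ M (.mk α [])
  | cons {Γ₀ Γ₁ : TEnv} {Δ : VEnv} {M : Lam} {α α' : STy} {l : List STy} :
      Der Γ₀ Δ M (.simple α) → DerB Γ₁ Δ M (.mk α' l) →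
      DerB (Γ₀ + Γ₁) Δ M (.mk α (α' :: l))
end

/-- The multi-type interpretation `⟦M⟧`. -/
def interp (M : Lam) : Set (TEnv × VEnv × OTy) :=
  { p | Der p.1 p.2.1 M p.2.2 }

/-! # Ohana trees (coinductive equality, as a greatest fixpoint) -/

/-- Matching of the spines `y M₁ ⋯ Mₖ` of two head normal forms:
same head variable, same number of arguments, arguments related by `R`. -/
inductive SpineMatch (R : Lam → Lam → Prop) : Lam → Lam → Prop
  | var (y : ℕ) : SpineMatch R (.var y) (.var y)
  | app {P Q M N : Lam} : SpineMatch R P Q → R M N →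
      SpineMatch R (.app P M) (.app Q N)

/-- Matching of two head normal forms, comparing abstraction prefixes
up to renaming of the bound variables. -/
inductive HnfMatch (R : Lam → Lam → Prop) : Lam → Lam → Prop
  | base {P Q : Lam} : SpineMatch R P Q → HnfMatch R P Q
  | lam {x y : ℕ} {P Q : Lam} :
      (∀ z : ℕ, z ∉ (P.fv.erase x ∪ Q.fv.erase y) →
        HnfMatch R (P.subst x (.var z)) (Q.subst y (.var z))) →
      HnfMatch R (.lam x P) (.lam y Q)

/-- `R` is an Ohana-tree bisimulation. -/
def OTBisim (R : Lam → Lam → Prop) : Prop :=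
  ∀ M N, R M N →
    (¬ HasHnf M ∧ ¬ HasHnf N ∧ M.fv = N.fv) ∨
    (∃ P Q, HeadStar M P ∧ HeadStar N Q ∧ Hnf P ∧ Hnf Q ∧ HnfMatch R P Q)

/-- Equality of Ohana trees: `OT(M) = OT(N)`. -/
def OTEq (M N : Lam) : Prop := ∃ R, OTBisim R ∧ R M N

/-! # λI-resource terms -/

mutual
inductive RTm : Type
  | var : ℕ → RTm
  | lam : ℕ → RTm → RTm
  | app : RTm → RBag → RTm
inductive RBag : Type
  | empty : Finset ℕ → RBag
  | mk : RTm → List RTm → RBag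
end

noncomputable instance : DecidableEq RTm := fun _ _ => Classical.dec _
noncomputable instance : DecidableEq RBag := fun _ _ => Classical.dec _

mutual
/-- Free variables of a resource term. -/
def RTm.fv : RTm → Finset ℕ
  | .var x => {x}
  | .lam x s => s.fv.erase x
  | .app s b => s.fv ∪ b.fv
/-- Free variables of a bag. -/
def RBag.fv : RBag → Finset ℕ
  | .empty X => X
  | .mk h t => h.fv ∪ RTm.fvL t
/-- Free variables of a list of resource terms. -/
def RTm.fvL : List RTm → Finset ℕ
  | [] => ∅
  | h :: t => h.fv ∪ RTm.fvL t
end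

mutual
/-- λI-resource terms: in every abstraction `λx.s`, `x` occurs free in `s`. -/
inductive RTm.IsIr : RTm → Prop
  | var (x : ℕ) : RTm.IsIr (.var x)
  | lam {x : ℕ} {s : RTm} : x ∈ s.fv → RTm.IsIr s → RTm.IsIr (.lam x s)
  | app {s : RTm} {b : RBag} : RTm.IsIr s → RBag.IsIr b → RTm.IsIr (.app s b)
inductive RBag.IsIr : RBag → Prop
  | empty (X : Finset ℕ) : RBag.IsIr (.empty X)
  | mk {h : RTm} {t : List RTm} : RTm.IsIr h → (∀ u ∈ t, RTm.IsIr u) →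
      RBag.IsIr (.mk h t)
end

/-- The list of elements of a bag. -/
def RBag.toList : RBag → List RTm
  | .empty _ => []
  | .mk h t => h :: t

/-! Linear (bijective) substitution: `LSub s x ts t` means that `t` is obtained
by substituting the elements of the list `ts` for the free occurrences of `x`
in `s`, in left-to-right order (annotations of empty bags absorb). -/
mutual
inductive LSub : RTm → ℕ → List RTm → RTm → Prop
  | var_hit (x : ℕ) (t : RTm) : LSub (.var x) x [t] t
  | var_miss {x y : ℕ} : y ≠ x → LSub (.var y) x [] (.var y)
  | lam {x y : ℕ} {s : RTm} {ts : List RTm} {s' : RTm} :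
      y ≠ x → y ∉ RTm.fvL ts → LSub s x ts s' →
      LSub (.lam y s) x ts (.lam y s')
  | app {s : RTm} {b : RBag} {x : ℕ} {ts₁ ts₂ : List RTm} {s' : RTm} {b' : RBag} :
      LSub s x ts₁ s' → LSubB b x ts₂ b' →
      LSub (.app s b) x (ts₁ ++ ts₂) (.app s' b')
inductive LSubB : RBag → ℕ → List RTm → RBag → Prop
  | empty_hit {X : Finset ℕ} {x : ℕ} {ts : List RTm} :
      x ∈ X → LSubB (.empty X) x ts (.empty ((X.erase x) ∪ RTm.fvL ts))
  | empty_miss {X : Finset ℕ} {x : ℕ} :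
      x ∉ X → LSubB (.empty X) x [] (.empty X)
  | mk {h : RTm} {t : List RTm} {x : ℕ} {ts₁ ts₂ : List RTm} {h' : RTm}
      {t' : List RTm} :
      LSub h x ts₁ h' → LSubL t x ts₂ t' →
      LSubB (.mk h t) x (ts₁ ++ ts₂) (.mk h' t')
inductive LSubL : List RTm → ℕ → List RTm → List RTm → Prop
  | nil (x : ℕ) : LSubL [] x [] []
  | cons {h : RTm} {t : List RTm} {x : ℕ} {ts₁ ts₂ : List RTm} {h' : RTm}
      {t' : List RTm} :
      LSub h x ts₁ h' → LSubL t x ts₂ t' →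
      LSubL (h :: t) x (ts₁ ++ ts₂) (h' :: t')
end

/-- The root resource reduction step `(λx.s)b →r T`:
`T` is the sum of all results of bijective substitution of the elements
of `b` for the free occurrences of `x` in `s`. -/
def RootRed (x : ℕ) (s : RTm) (b : RBag) (T : Finset RTm) : Prop :=
  ∀ u : RTm, u ∈ T ↔ ∃ l : List RTm, l.Perm b.toList ∧ LSub s x l u

/-- Pushing an element on top of a bag. -/
def RBag.push (h : RTm) : RBag → RBag
  | .empty _ => .mk h []
  | .mk h' t => .mk h (h' :: t)

mutual
/-- One-step resource reduction of a term to a finite sum. -/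
inductive RStep : RTm → Finset RTm → Prop
  | root {x : ℕ} {s : RTm} {b : RBag} {T : Finset RTm} :
      RootRed x s b T → RStep (.app (.lam x s) b) T
  | appL {s : RTm} {T : Finset RTm} {b : RBag} :
      RStep s T → RStep (.app s b) (T.image fun s' => .app s' b)
  | appB {s : RTm} {b : RBag} {Tb : Finset RBag} :
      RStepB b Tb → RStep (.app s b) (Tb.image fun b' => .app s b')
  | lam {x : ℕ} {s : RTm} {T : Finset RTm} :
      RStep s T → RStep (.lam x s) (T.image fun s' => .lam x s')
/-- One-step resource reduction inside a bag. -/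
inductive RStepB : RBag → Finset RBag → Prop
  | head {h : RTm} {t : List RTm} {T : Finset RTm} :
      RStep h T → RStepB (.mk h t) (T.image fun h' => .mk h' t)
  | tail {h h₂ : RTm} {t : List RTm} {B : Finset RBag} :
      RStepB (.mk h₂ t) B → RStepB (.mk h (h₂ :: t)) (B.image (RBag.push h))
end

/-- One-step resource reduction on finite sums (linear extension). -/
inductive RRed : Finset RTm → Finset RTm → Prop
  | step {S : Finset RTm} {s : RTm} {T : Finset RTm} :
      s ∈ S → RStep s T → RRed S ((S.erase s) ∪ T)

/-- `→r*`. -/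
def RRedStar : Finset RTm → Finset RTm → Prop := Relation.ReflTransGen RRed

/-! # The resource multi-type system -/

mutual
/-- Resource typing judgement `Γ; Δ ⊢ s : α`. -/
inductive DerR : TEnv → VEnv → RTm → STy → Prop
  | ax (x : ℕ) (α : STy) (X : Finset ℕ) :
      DerR (Finsupp.single x {α}) (Finmap.singleton x X) (.var x) α
  | app {Γ₀ Γ₁ : TEnv} {Δ₀ Δ₁ : VEnv} {s : RTm} {b : RBag} {m : MTy} {β : STy} :
      DerR Γ₀ Δ₀ s (m.arr β) → DerRB Γ₁ Δ₁ b m → VEnv.Coh Δ₀ Δ₁ →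
      DerR (Γ₀ + Γ₁) (Δ₀ ∪ Δ₁) (.app s b) β
  | lam0 {Γ : TEnv} {Δ : VEnv} {x : ℕ} {X : Finset ℕ} {s : RTm} {β : STy} :
      Γ x = 0 → x ∉ Δ → DerR Γ (Δ.insert x X) s β →
      DerR Γ Δ (.lam x s) (.arr0 X β)
  | lamP {Γ : TEnv} {Δ : VEnv} {x : ℕ} {X : Finset ℕ} {s : RTm} {α : STy}
      {l : List STy} {β : STy} :
      Γ x = 0 → x ∉ Δ →
      DerR (Γ + Finsupp.single x (MTy.mk α l).toM) (Δ.insert x X) s β →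
      DerR Γ Δ (.lam x s) (.arrP α l β)
/-- Resource typing judgement `Γ; Δ ⊢! t̄ : ᾱ`. -/
inductive DerRB : TEnv → VEnv → RBag → MTy → Prop
  | bang0 {Δ : VEnv} : DerRB 0 Δ (.empty Δ.keys) (.empty Δ.uni)
  | one {Γ : TEnv} {Δ : VEnv} {t : RTm} {α : STy} :
      DerR Γ Δ t α → DerRB Γ Δ (.mk t []) (.mk α [])
  | cons {Γ₀ Γ₁ : TEnv} {Δ : VEnv} {t t' : RTm} {l : List RTm} {α α' : STy}
      {la : List STy} :
      DerR Γ₀ Δ t α → DerRB Γ₁ Δ (.mk t' l) (.mk α' la) →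
      DerRB (Γ₀ + Γ₁) Δ (.mk t (t' :: l)) (.mk α (α' :: la))
end

/-! # Taylor expansion -/

/-- `Taylor M s`: the resource term `s` belongs to the Taylor expansion `T(M)`. -/
inductive Taylor : Lam → RTm → Prop
  | var (x : ℕ) : Taylor (.var x) (.var x)
  | lam {M : Lam} {s : RTm} (x : ℕ) : Taylor M s → Taylor (.lam x M) (.lam x s)
  | app0 {M N : Lam} {s : RTm} : Taylor M s →
      Taylor (.app M N) (.app s (.empty N.fv))
  | appP {M N : Lam} {s t : RTm} {l : List RTm} :
      Taylor M s → Taylor N t → (∀ u ∈ l, Taylor N u) →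
      Taylor (.app M N) (.app s (.mk t l))

/-! # Miscellaneous constructions for the last statement -/

/-- The variable environment `Δ_id` mapping each `x ∈ s` to `{x}`. -/
def idEnv (s : Finset ℕ) : VEnv :=
  (s.sort (· ≤ ·)).foldr (fun x Δ => Δ.insert x ({x} : Finset ℕ)) ∅

/-- The term `y M₁ ⋯ Mₖ`. -/
def Lam.spineApp (y : ℕ) (l : List Lam) : Lam := l.foldl .app (.var y)

/-- The type `[]_{fv N₁} → ⋯ → []_{fv Nₖ} → a`. -/
def yTyRest (a : ℕ) : List Lam → STy
  | [] => .atom a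
  | N :: l => .arr0 N.fv (yTyRest a l)

/-- The type `[]_{fv M₁} → ⋯ → [α] → ⋯ → []_{fv Mₖ} → a`, with `[α]`
in the `i`-th argument position (0-based). -/
def yTy (α : STy) (a : ℕ) : List Lam → ℕ → STy
  | [], _ => .atom a
  | _ :: l, 0 => .arrP α [] (yTyRest a l)
  | N :: l, (i+1) => .arr0 N.fv (yTy α a l i)

theorem derB_mk_imp {N : Lam}
    (ih : ∀ Γ Δ α, Der Γ Δ N (.simple α) → ∃ s, Taylor N s ∧ DerR Γ Δ s α)
    (l : List STy) : ∀ (Γ : TEnv) (Δ : VEnv) (α : STy), DerB Γ Δ N (.mk α l) →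
      ∃ t ts, Taylor N t ∧ (∀ u ∈ ts, Taylor N u) ∧ DerRB Γ Δ (.mk t ts) (.mk α l) := by
  induction l with
  | nil =>
    intro Γ Δ α h
    cases h with
    | one h =>
      obtain ⟨s, hs, hd⟩ := ih _ _ _ h
      exact ⟨s, [], hs, by simp, .one hd⟩
  | cons a l ihl =>
    intro Γ Δ α h
    cases h with
    | cons h h' =>
      obtain ⟨s, hs, hd⟩ := ih _ _ _ h
      obtain ⟨t, ts, ht, hts, hd'⟩ := ihl _ _ _ h'
      refine ⟨s, t :: ts, hs, ?_, .cons hd hd'⟩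
      intro u hu
      rcases List.mem_cons.1 hu with rfl | hu
      · exact ht
      · exact hts u hu

theorem derRB_mk_imp {N : Lam}
    (ih : ∀ Γ Δ α s, Taylor N s → DerR Γ Δ s α → Der Γ Δ N (.simple α))
    (ts : List RTm) : ∀ (Γ : TEnv) (Δ : VEnv) (t : RTm) (m : MTy), Taylor N t →
      (∀ u ∈ ts, Taylor N u) → DerRB Γ Δ (.mk t ts) m → DerB Γ Δ N m := by
  induction ts with
  | nil =>
    intro Γ Δ t m ht hts h
    cases h with
    | one h => exact .one (ih _ _ _ _ ht h)
  | cons a l ihl =>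
    intro Γ Δ t m ht hts h
    cases h with
    | cons h h' =>
      exact .cons (ih _ _ _ _ ht h)
        (ihl _ _ _ _ (hts a (by simp)) (fun u hu => hts u (by simp [hu])) h')

theorem der_imp_taylor (M : Lam) : ∀ (Γ : TEnv) (Δ : VEnv) (α : STy),
    Der Γ Δ M (.simple α) → ∃ s, Taylor M s ∧ DerR Γ Δ s α := by
  induction M with
  | var x =>
    intro Γ Δ α h
    cases h with
    | ax => exact ⟨_, .var x, .ax _ _ _⟩
  | app M N ihM ihN =>
    intro Γ Δ α h
    cases h with
    | @app _ _ _ _ _ _ m _ h h' hc =>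
      obtain ⟨s, hs, hd⟩ := ihM _ _ _ h
      cases m with
      | empty X =>
        cases h' with
        | @bang0 Δ' _ hk =>
          refine ⟨_, .app0 hs, .app hd ?_ hc⟩
          rw [← hk]
          exact .bang0
      | mk a l =>
        obtain ⟨t, ts, ht, hts, hd'⟩ := derB_mk_imp ihN l _ _ _ h'
        exact ⟨_, .appP hs ht hts, .app hd hd' hc⟩
  | lam x M ih =>
    intro Γ Δ α h
    cases h with
    | lam0 h1 h2 h =>
      obtain ⟨s, hs, hd⟩ := ih _ _ _ h
      exact ⟨_, .lam x hs, .lam0 h1 h2 hd⟩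
    | lamP h1 h2 h =>
      obtain ⟨s, hs, hd⟩ := ih _ _ _ h
      exact ⟨_, .lam x hs, .lamP h1 h2 hd⟩

theorem taylor_imp_der (M : Lam) : ∀ (Γ : TEnv) (Δ : VEnv) (α : STy) (s : RTm),
    Taylor M s → DerR Γ Δ s α → Der Γ Δ M (.simple α) := by
  induction M with
  | var x =>
    intro Γ Δ α s hs h
    cases hs
    cases h
    exact .ax _ _ _
  | app M N ihM ihN =>
    intro Γ Δ α s hs h
    cases hs with
    | app0 hs =>
      cases h with
      | app h h' hc =>
        refine .app (ihM _ _ _ _ hs h) ?_ hc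
        generalize hX : N.fv = X at h'
        cases h' with
        | bang0 => exact .bang0 hX.symm
    | appP hs ht hl =>
      cases h with
      | app h h' hc =>
        exact .app (ihM _ _ _ _ hs h) (derRB_mk_imp ihN _ _ _ _ _ ht hl h') hc
  | lam x M ih =>
    intro Γ Δ α s hs h
    cases hs with
    | lam _ hs =>
      cases h with
      | lam0 h1 h2 h => exact .lam0 h1 h2 (ih _ _ _ _ hs h)
      | lamP h1 h2 h => exact .lamP h1 h2 (ih _ _ _ _ hs h)

/-- Approximation Theorem. -/
theorem stmt10 (M : Lam) (hM : M.IsI) (Γ : TEnv) (Δ : VEnv) (σ : OTy) :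
    (Γ, Δ, σ) ∈ interp M ↔
      ((σ = .esum (VEnv.uni Δ) ∧ Γ.support = ∅ ∧ Δ.keys = M.fv) ∨
       (∃ (α : STy) (s : RTm), σ = .simple α ∧ Taylor M s ∧ DerR Γ Δ s α)) := by
  constructor
  · intro h
    change Der Γ Δ M σ at h
    cases σ with
    | esum X =>
      left
      cases h with
      | esum hk => exact ⟨rfl, by simp, hk⟩
    | simple α =>
      right
      obtain ⟨s, hs, hd⟩ := der_imp_taylor M _ _ _ h
      exact ⟨α, s, rfl, hs, hd⟩
  · rintro (⟨rfl, hΓ, hk⟩ | ⟨α, s, rfl, hs, hd⟩)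
    · rw [Finsupp.support_eq_empty] at hΓ
      subst hΓ
      exact Der.esum hk
    · exact taylor_imp_der M _ _ _ _ hs hd
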